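/- In the group VP_4 the following conjugation formulas hold: (1) a_{22}^{c_{12}^{−1}} = a_{13}^{c_{13}^{−1} c_{31}} · (a_{13}^{c_{13}^{−1} c_{22}})^{−1} · a_{22} · [c_{21}, c_{12}^{−1}]; (2) b_{22}^{c_{12}} = [c_{12}, c_{21}^{−1}] · b_{22} · (b_{13}^{c_{13} c_{22}^{−1}})^{−1} · b_{13}^{c_{13} c_{31}^{−1}}; (3) a_{22}^{c_{12}} = [c_{12}, c_{21}^{−1}] · (a_{13}^{c_{13} c_{22}^{−1}})^{−1} · a_{22} · a_{13}^{c_{13} c_{31}^{−1}}; (4) b_{22}^{c_{12}^{−1}} = b_{13}^{c_{13}^{−1} c_{31}} · b_{22} · (b_{13}^{c_{13}^{−1} c_{22}})^{−1} · [c_{21}, c_{12}^{−1}]. -/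

import Mathlib

/-!
Write `1, 2, 3, 4` for the strands (the code numbers them from `0`). An element `a_{ij}` passes the
cable of the first `i` strands over the cable of the next `j`, and `c_{ij}` is the corresponding
double crossing.

On three strands, the Yang–Baxter relations show that `c_{11}` commutes with `a_{21}` and `b_{21}`,
that `d = λ_{3,2} λ_{2,3}` commutes with `a_{12}` and `b_{12}`, and that
`c_{12} d = c_{21} c_{11}` (the full twist). Hence conjugating `a_{12}` or `b_{12}` by `c_{11}^{-1}`
is the same as conjugating by `c_{12}^{-1} c_{21}`, and likewise for the inverses. Doubling a strand
preserves the Yang–Baxter relations. Doubling the second strand identifies the action of `c_{12}`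
on `a_{13}, b_{13}` with that of `c_{13} c_{31}^{-1}`; doubling the third identifies the
action of `c_{11}` with that of `c_{13} c_{22}^{-1}`, and shows that `c_{11}` commutes with
`a_{22}` and `b_{22}`. Moreover `c_{12}` commutes with the full twist `c_{21} c_{11}`, so
`c_{21}` acts on `c_{12}` as `c_{11}^{-1}` does.

Substituting all this, the four formulas become identities between
`a_{22}, a_{13}, b_{22}, b_{13}, c_{11}, c_{12}` (the lemmas `core1`–`core4`), each
of which follows from a few applications of the defining relations.
-/

namespace Paper

/-- Generators `λ_{i,j}`, `1 ≤ i ≠ j ≤ n` (here `0`-indexed: `i j : Fin n`, `i ≠ j`). -/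
abbrev VPGen (n : ℕ) := {p : Fin n × Fin n // p.1 ≠ p.2}

/-- The generator `λ_{i,j}` as an element of the free group (junk value `1` if `i = j`). -/
def flam {n : ℕ} (i j : Fin n) : FreeGroup (VPGen n) :=
  if h : i ≠ j then FreeGroup.of ⟨(i, j), h⟩ else 1

/-- The defining relations of the virtual pure braid group `VP_n`:
`λ_{i,j}λ_{k,l} = λ_{k,l}λ_{i,j}` and `λ_{k,i}λ_{k,j}λ_{i,j} = λ_{i,j}λ_{k,j}λ_{k,i}`,
where distinct letters stand for distinct indices. -/
def VPRels (n : ℕ) : Set (FreeGroup (VPGen n)) :=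
  {r | (∃ i j k l : Fin n, i ≠ j ∧ k ≠ l ∧ i ≠ k ∧ i ≠ l ∧ j ≠ k ∧ j ≠ l ∧
          r = flam i j * flam k l * (flam k l * flam i j)⁻¹) ∨
       (∃ i j k : Fin n, i ≠ j ∧ k ≠ i ∧ k ≠ j ∧
          r = flam k i * flam k j * flam i j * (flam i j * flam k j * flam k i)⁻¹)}

/-- The virtual pure braid group `VP_n`, given by its presentation. -/
abbrev VP (n : ℕ) := PresentedGroup (VPRels n)

/-- The generator `λ_{i,j}` as an element of `VP_n` (junk value `1` if `i = j`). -/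
def glam {n : ℕ} (i j : Fin n) : VP n :=
  if h : i ≠ j then PresentedGroup.of ⟨(i, j), h⟩ else 1

/-- Conjugation `a^b = b⁻¹ * a * b`. -/
def cj {G : Type*} [Group G] (a b : G) : G := b⁻¹ * a * b

/-- Commutator `[a, b] = a⁻¹ * b⁻¹ * a * b`. -/
def cm {G : Type*} [Group G] (a b : G) : G := a⁻¹ * b⁻¹ * a * b

/-- `a_{11} = λ_{1,2}` in `VP_4`. -/
def a11 : VP 4 := glam 0 1
/-- `b_{11} = λ_{2,1}`. -/
def b11 : VP 4 := glam 1 0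
/-- `a_{21} = λ_{1,3}λ_{2,3}`. -/
def a21 : VP 4 := glam 0 2 * glam 1 2
/-- `a_{12} = λ_{1,3}λ_{1,2}`. -/
def a12 : VP 4 := glam 0 2 * glam 0 1
/-- `b_{21} = λ_{3,2}λ_{3,1}`. -/
def b21 : VP 4 := glam 2 1 * glam 2 0
/-- `b_{12} = λ_{2,1}λ_{3,1}`. -/
def b12 : VP 4 := glam 1 0 * glam 2 0
/-- `a_{31} = λ_{1,4}λ_{2,4}λ_{3,4}`. -/
def a31 : VP 4 := glam 0 3 * glam 1 3 * glam 2 3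
/-- `a_{22} = λ_{1,4}λ_{2,4}λ_{1,3}λ_{2,3}`. -/
def a22 : VP 4 := glam 0 3 * glam 1 3 * glam 0 2 * glam 1 2
/-- `a_{13} = λ_{1,4}λ_{1,3}λ_{1,2}`. -/
def a13 : VP 4 := glam 0 3 * glam 0 2 * glam 0 1
/-- `b_{31} = λ_{4,3}λ_{4,2}λ_{4,1}`. -/
def b31 : VP 4 := glam 3 2 * glam 3 1 * glam 3 0
/-- `b_{22} = λ_{3,2}λ_{3,1}λ_{4,2}λ_{4,1}`. -/
def b22 : VP 4 := glam 2 1 * glam 2 0 * glam 3 1 * glam 3 0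
/-- `b_{13} = λ_{2,1}λ_{3,1}λ_{4,1}`. -/
def b13 : VP 4 := glam 1 0 * glam 2 0 * glam 3 0
/-- `c_{11} = b_{11}a_{11}`. -/
def c11 : VP 4 := b11 * a11
/-- `c_{21} = b_{21}a_{21}`. -/
def c21 : VP 4 := b21 * a21
/-- `c_{12} = b_{12}a_{12}`. -/
def c12 : VP 4 := b12 * a12
/-- `c_{31} = b_{31}a_{31}`. -/
def c31 : VP 4 := b31 * a31
/-- `c_{22} = b_{22}a_{22}`. -/
def c22 : VP 4 := b22 * a22
/-- `c_{13} = b_{13}a_{13}`. -/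
def c13 : VP 4 := b13 * a13

/-! ### The relations of the presentation -/

lemma flam_mk {n : ℕ} (i j : Fin n) : PresentedGroup.mk (VPRels n) (flam i j) = glam i j := by
  unfold flam glam
  split_ifs
  · rfl
  · simp

lemma glam_comm {n : ℕ} (i j k l : Fin n)
    (h : i ≠ j ∧ k ≠ l ∧ i ≠ k ∧ i ≠ l ∧ j ≠ k ∧ j ≠ l) :
    (glam i j : VP n) * glam k l = glam k l * glam i j := by
  obtain ⟨h1, h2, h3, h4, h5, h6⟩ := h
  have := PresentedGroup.one_of_mem (rels := VPRels n)
    (Or.inl ⟨i, j, k, l, h1, h2, h3, h4, h5, h6, rfl⟩)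
  simpa only [map_mul, map_inv, flam_mk, mul_inv_eq_one] using this

lemma glam_yb {n : ℕ} (k i j : Fin n) (h : i ≠ j ∧ k ≠ i ∧ k ≠ j) :
    (glam k i : VP n) * glam k j * glam i j = glam i j * glam k j * glam k i := by
  obtain ⟨h1, h2, h3⟩ := h
  have := PresentedGroup.one_of_mem (rels := VPRels n) (Or.inr ⟨i, j, k, h1, h2, h3, rfl⟩)
  simpa only [map_mul, map_inv, flam_mk, mul_inv_eq_one] using this

section Assoc
variable {G : Type*} [Group G]

/-- The relation `xy = yx` in the form in which it rewrites right-nested products. -/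
lemma comm_left {x y : G} (h : x * y = y * x) (t : G) : x * (y * t) = y * (x * t) := by
  rw [← mul_assoc, h, mul_assoc]

/-- The relation `xyz = zyx` in the form in which it rewrites right-nested products. -/
lemma yb_left {x y z : G} (h : x * y * z = z * y * x) (t : G) :
    x * (y * (z * t)) = z * (y * (x * t)) := by
  simpa only [mul_assoc] using congrArg (· * t) h

lemma yb_right {x y z : G} (h : x * y * z = z * y * x) : x * (y * z) = z * (y * x) := by
  simpa only [mul_assoc] using h

end Assoc

/-! ### Three (possibly cabled) strands -/

/-- The six Yang–Baxter relations between the crossings of three strands; `xij` stands for the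
crossing of strand `i` over strand `j`. -/
structure YB3 {G : Type*} [Group G] (x12 x13 x23 x21 x31 x32 : G) : Prop where
  r123 : x12 * x13 * x23 = x23 * x13 * x12
  r132 : x13 * x12 * x32 = x32 * x12 * x13
  r213 : x21 * x23 * x13 = x13 * x23 * x21
  r231 : x23 * x21 * x31 = x31 * x21 * x23
  r312 : x31 * x32 * x12 = x12 * x32 * x31
  r321 : x32 * x31 * x21 = x21 * x31 * x32

namespace YB3
variable {G : Type*} [Group G] {x12 x13 x23 x21 x31 x32 : G}

/-- In cabled notation, `c_{11}` commutes with `a_{21}`. -/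
lemma comm_a21 (h : YB3 x12 x13 x23 x21 x31 x32) : Commute (x21 * x12) (x13 * x23) := by
  show x21 * x12 * (x13 * x23) = x13 * x23 * (x21 * x12)
  simp only [mul_assoc]
  rw [yb_right h.r123, yb_left h.r213]

/-- In cabled notation, `c_{11}` commutes with `b_{21}`. -/
lemma comm_b21 (h : YB3 x12 x13 x23 x21 x31 x32) : Commute (x21 * x12) (x32 * x31) := by
  show x21 * x12 * (x32 * x31) = x32 * x31 * (x21 * x12)
  simp only [mul_assoc]
  rw [← yb_right h.r312, ← yb_left h.r321]

/-- In cabled notation, `d = x32 * x23` commutes with `a_{12}`. -/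
lemma comm_a12 (h : YB3 x12 x13 x23 x21 x31 x32) : Commute (x32 * x23) (x13 * x12) := by
  show x32 * x23 * (x13 * x12) = x13 * x12 * (x32 * x23)
  simp only [mul_assoc]
  rw [← yb_right h.r123, ← yb_left h.r132]

/-- In cabled notation, `d = x32 * x23` commutes with `b_{12}`. -/
lemma comm_b12 (h : YB3 x12 x13 x23 x21 x31 x32) : Commute (x32 * x23) (x21 * x31) := by
  show x32 * x23 * (x21 * x31) = x21 * x31 * (x32 * x23)
  simp only [mul_assoc]
  rw [yb_right h.r231, yb_left h.r321]

lemma comm_c21 (h : YB3 x12 x13 x23 x21 x31 x32) :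
    Commute (x21 * x12) (x32 * x31 * (x13 * x23)) := h.comm_b21.mul_right h.comm_a21

lemma comm_c12 (h : YB3 x12 x13 x23 x21 x31 x32) :
    Commute (x32 * x23) (x21 * x31 * (x13 * x12)) := h.comm_b12.mul_right h.comm_a12

/-- The two expressions `c_{12} d = c_{21} c_{11}` of the full twist, where `d = x32 * x23`. -/
lemma full_twist (h : YB3 x12 x13 x23 x21 x31 x32) :
    x21 * x31 * (x13 * x12) * (x32 * x23) = x32 * x31 * (x13 * x23) * (x21 * x12) := by
  rw [mul_assoc (x21 * x31), ← h.comm_a12.eq]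
  simp only [mul_assoc]
  rw [← yb_left h.r213, ← yb_left h.r321]

/-- An element that commutes with `d = x32 * x23` is conjugated by `c_{11}^{-1}` as by
`c_{12}^{-1} c_{21}`. -/
lemma cj_inv (h : YB3 x12 x13 x23 x21 x31 x32) {y : G} (hy : Commute (x32 * x23) y) :
    cj y ((x21 * x31 * (x13 * x12))⁻¹ * (x32 * x31 * (x13 * x23))) = cj y (x21 * x12)⁻¹ := by
  have e : x21 * x12 = (x32 * x31 * (x13 * x23))⁻¹ * (x21 * x31 * (x13 * x12)) * (x32 * x23) := by
    rw [mul_assoc _ _ (x32 * x23), h.full_twist, inv_mul_cancel_left]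
  have hy' : x32 * x23 * y * (x32 * x23)⁻¹ = y := by rw [hy.eq, mul_inv_cancel_right]
  rw [e]
  generalize x32 * x23 = d at *
  generalize x32 * x31 * (x13 * x23) = p at *
  generalize x21 * x31 * (x13 * x12) = q at *
  conv_lhs => rw [← hy']
  simp only [cj]
  group

/-- An element that commutes with `d = x32 * x23` is conjugated by `c_{11}` as by
`c_{12} c_{21}^{-1}`. -/
lemma cj_pos (h : YB3 x12 x13 x23 x21 x31 x32) {y : G} (hy : Commute (x32 * x23) y) :
    cj y (x21 * x31 * (x13 * x12) * (x32 * x31 * (x13 * x23))⁻¹) = cj y (x21 * x12) := by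
  have e : x21 * x12 = (x32 * x23) * (x21 * x31 * (x13 * x12)) * (x32 * x31 * (x13 * x23))⁻¹ := by
    rw [h.comm_c12.eq, h.full_twist, ← h.comm_c21.eq, mul_inv_cancel_right]
  have hy' : (x32 * x23)⁻¹ * y * (x32 * x23) = y := by rw [mul_assoc, ← hy.eq, inv_mul_cancel_left]
  rw [e]
  generalize x32 * x23 = d at *
  generalize x32 * x31 * (x13 * x23) = p at *
  generalize x21 * x31 * (x13 * x12) = q at *
  conv_lhs => rw [← hy']
  simp only [cj]
  group

/-- `c_{12}` commutes with the full twist. -/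
lemma comm_twist (h : YB3 x12 x13 x23 x21 x31 x32) :
    Commute (x21 * x31 * (x13 * x12)) (x32 * x31 * (x13 * x23) * (x21 * x12)) := by
  rw [← h.full_twist]
  exact (Commute.refl _).mul_right h.comm_c12.symm

end YB3

/-! ### Cablings of three strands by four -/

/-- The strands `1, 2, 3` of `VP_4`. -/
lemma yb3_plain : YB3 (G := VP 4)
    (glam 0 1) (glam 0 2) (glam 1 2)
    (glam 1 0) (glam 2 0) (glam 2 1) where
  r123 := glam_yb 0 1 2 (by decide)
  r132 := glam_yb 0 2 1 (by decide)
  r213 := glam_yb 1 0 2 (by decide)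
  r231 := glam_yb 1 2 0 (by decide)
  r312 := glam_yb 2 0 1 (by decide)
  r321 := glam_yb 2 1 0 (by decide)

/-- The cables `{1}, {2, 3}, {4}`, obtained by doubling the second of three strands. -/
lemma yb3_double2 : YB3 (G := VP 4)
    (glam 0 2 * glam 0 1) (glam 0 3) (glam 1 3 * glam 2 3)
    (glam 1 0 * glam 2 0) (glam 3 0) (glam 3 2 * glam 3 1) where
  r123 := by
    simp only [mul_assoc]
    rw [yb_left (glam_yb 0 1 3 (by decide)),
      comm_left (glam_comm 0 2 1 3 (by decide)),
      glam_comm 0 1 2 3 (by decide),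
      yb_left (glam_yb 0 2 3 (by decide))]
  r132 := by
    simp only [mul_assoc]
    rw [comm_left (glam_comm 0 1 3 2 (by decide)),
      yb_left (glam_yb 0 3 2 (by decide)),
      yb_right (glam_yb 0 3 1 (by decide)),
      comm_left (glam_comm 0 2 3 1 (by decide))]
  r213 := by
    simp only [mul_assoc]
    rw [comm_left (glam_comm 2 0 1 3 (by decide)),
      yb_right (glam_yb 2 0 3 (by decide)),
      yb_left (glam_yb 1 0 3 (by decide)),
      comm_left (glam_comm 1 0 2 3 (by decide))]
  r231 := by
    simp only [mul_assoc]
    rw [comm_left (glam_comm 2 3 1 0 (by decide)),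
      yb_right (glam_yb 2 3 0 (by decide)),
      yb_left (glam_yb 1 3 0 (by decide)),
      comm_left (glam_comm 1 3 2 0 (by decide))]
  r312 := by
    simp only [mul_assoc]
    rw [comm_left (glam_comm 3 1 0 2 (by decide)),
      yb_left (glam_yb 3 0 2 (by decide)),
      yb_right (glam_yb 3 0 1 (by decide)),
      comm_left (glam_comm 3 2 0 1 (by decide))]
  r321 := by
    simp only [mul_assoc]
    rw [yb_left (glam_yb 3 1 0 (by decide)),
      comm_left (glam_comm 3 2 1 0 (by decide)),
      glam_comm 3 1 2 0 (by decide),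
      yb_left (glam_yb 3 2 0 (by decide))]

/-- The cables `{1}, {2}, {3, 4}`, obtained by doubling the third of three strands. -/
lemma yb3_double3 : YB3 (G := VP 4)
    (glam 0 1) (glam 0 3 * glam 0 2) (glam 1 3 * glam 1 2)
    (glam 1 0) (glam 2 0 * glam 3 0) (glam 2 1 * glam 3 1) where
  r123 := by
    simp only [mul_assoc]
    rw [comm_left (glam_comm 0 2 1 3 (by decide)),
      yb_left (glam_yb 0 1 3 (by decide)),
      yb_right (glam_yb 0 1 2 (by decide)),
      comm_left (glam_comm 0 3 1 2 (by decide))]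
  r132 := by
    simp only [mul_assoc]
    rw [yb_left (glam_yb 0 2 1 (by decide)),
      comm_left (glam_comm 0 3 2 1 (by decide)),
      glam_comm 0 2 3 1 (by decide),
      yb_left (glam_yb 0 3 1 (by decide))]
  r213 := by
    simp only [mul_assoc]
    rw [comm_left (glam_comm 1 2 0 3 (by decide)),
      yb_left (glam_yb 1 0 3 (by decide)),
      yb_right (glam_yb 1 0 2 (by decide)),
      comm_left (glam_comm 1 3 0 2 (by decide))]
  r231 := by
    simp only [mul_assoc]
    rw [yb_left (glam_yb 1 2 0 (by decide)),
      comm_left (glam_comm 1 3 2 0 (by decide)),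
      glam_comm 1 2 3 0 (by decide),
      yb_left (glam_yb 1 3 0 (by decide))]
  r312 := by
    simp only [mul_assoc]
    rw [comm_left (glam_comm 3 0 2 1 (by decide)),
      yb_right (glam_yb 3 0 1 (by decide)),
      yb_left (glam_yb 2 0 1 (by decide)),
      comm_left (glam_comm 2 0 3 1 (by decide))]
  r321 := by
    simp only [mul_assoc]
    rw [comm_left (glam_comm 3 1 2 0 (by decide)),
      yb_right (glam_yb 3 1 0 (by decide)),
      yb_left (glam_yb 2 1 0 (by decide)),
      comm_left (glam_comm 2 1 3 0 (by decide))]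

/-! ### Word identities in `VP_4` -/

/-- `a_{22} = λ_{1,4} λ_{1,3} λ_{2,4} λ_{2,3}`, whose initial part `λ_{1,4} λ_{1,3}` is
shared with `a_{13}`. -/
lemma a22_eq : (glam 0 3 * glam 1 3 * glam 0 2 * glam 1 2 : VP 4) =
    glam 0 3 * glam 0 2 * glam 1 3 * glam 1 2 := by
  simp only [mul_assoc]
  rw [comm_left (glam_comm 1 3 0 2 (by decide))]

/-- Moving `λ_{1,2}` from the left of `a_{22}` to its right produces a factor `a_{13}`. -/
lemma lam12_a22 : (glam 0 1 * glam 0 3 * glam 1 3 * glam 0 2 * glam 1 2 : VP 4) =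
    glam 1 3 * glam 1 2 * glam 0 3 * glam 0 2 * glam 0 1 := by
  simp only [mul_assoc]
  rw [yb_left (glam_yb 0 1 3 (by decide)),
    yb_right (glam_yb 0 1 2 (by decide)),
    comm_left (glam_comm 0 3 1 2 (by decide))]

/-- Moving `λ_{1,2}` from the left of `b_{22}` to its right exchanges strands `1` and `2` in it. -/
lemma lam12_b22 : (glam 0 1 * glam 2 1 * glam 2 0 * glam 3 1 * glam 3 0 : VP 4) =
    glam 2 0 * glam 3 0 * glam 2 1 * glam 3 1 * glam 0 1 := by
  simp only [mul_assoc]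
  rw [← yb_left (glam_yb 2 0 1 (by decide)),
    ← yb_right (glam_yb 3 0 1 (by decide)),
    comm_left (glam_comm 2 1 3 0 (by decide))]

/-- The word identity to which `core1` and `core3` reduce: `λ_{3,1} λ_{1,3}` moves across
`λ_{2,4} λ_{2,3} λ_{2,1}`. -/
lemma word_a : (glam 2 0 * glam 0 2 * glam 1 3 * glam 1 2 * glam 1 0 : VP 4) =
    glam 1 3 * glam 1 2 * glam 1 0 * glam 2 0 * glam 0 2 := by
  simp only [mul_assoc]
  rw [comm_left (glam_comm 0 2 1 3 (by decide)),
    comm_left (glam_comm 2 0 1 3 (by decide)),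
    ← yb_right (glam_yb 1 0 2 (by decide)),
    ← yb_left (glam_yb 1 2 0 (by decide))]

/-- The word identity to which `core2` and `core4` reduce. -/
lemma word_b : (glam 2 0 * glam 0 2 * glam 0 1 * glam 2 1 * glam 3 1 : VP 4) =
    glam 0 1 * glam 2 1 * glam 2 0 * glam 3 1 * glam 0 2 := by
  simp only [mul_assoc]
  rw [yb_left (glam_yb 0 2 1 (by decide)),
    glam_comm 0 2 3 1 (by decide),
    yb_left (glam_yb 2 0 1 (by decide))]

lemma lam42_lam31 : (glam 3 1 * glam 2 0 : VP 4) = glam 2 0 * glam 3 1 :=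
  glam_comm 3 1 2 0 (by decide)

/-! ### The conjugation formulas -/

/-- What is left of formula (1) once conjugation of `a_{13}` by `c_{13}^{-1} c_{31}` and
`c_{13}^{-1} c_{22}` is replaced by conjugation by `c_{12}^{-1}` and `c_{11}^{-1}`, and powers of
`c_{11}` are moved across `a_{22}`; `core2`, `core3` and `core4` play the same role for
formulas (2), (3) and (4). -/
lemma core1 : c11⁻¹ * c12 * (a13⁻¹ * a22) = a13⁻¹ * a22 * c12 * c11⁻¹ := by
  have hM : a13⁻¹ * a22 = (glam 0 1)⁻¹ * (glam 1 3 * glam 1 2) := by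
    rw [a22, a22_eq, a13]; group
  have hw := word_a
  rw [hM, c11, c12, a11, b11, a12, b12]
  generalize (glam 0 1 : VP 4) = x12 at *
  generalize (glam 1 0 : VP 4) = x21 at *
  generalize (glam 0 2 : VP 4) = x13 at *
  generalize (glam 2 0 : VP 4) = x31 at *
  generalize (glam 1 2 : VP 4) = x23 at *
  generalize (glam 1 3 : VP 4) = x24 at *
  calc _ = x12⁻¹ * (x31 * x13 * x24 * x23 * x21) * x21⁻¹ := by group
    _ = _ := by rw [hw]; group

lemma comm_c11_a22 : Commute c11 a22 := by
  have h := yb3_double3.comm_a21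
  have e : a22 = glam 0 3 * glam 0 2 * (glam 1 3 * glam 1 2) := by
    rw [a22, a22_eq, mul_assoc (glam 0 3 * glam 0 2)]
  rw [e]
  exact h

/-- The counterpart of `a22_eq`; the final part `λ_{3,1} λ_{4,1}` is shared with `b_{13}`. -/
lemma b22_eq : b22 = glam 2 1 * glam 3 1 * (glam 2 0 * glam 3 0) := by
  rw [b22, mul_assoc (glam 2 1), ← lam42_lam31]
  simp only [mul_assoc]

lemma comm_c11_b22 : Commute c11 b22 := by
  rw [b22_eq]
  exact yb3_double3.comm_b21

lemma core2 : c12 * b22 * b13⁻¹ * c11 = c11 * b22 * b13⁻¹ * c12 := by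
  have hw := word_b
  have h := lam42_lam31
  rw [c11, c12, a11, b11, a12, b12, b13, b22]
  generalize (glam 0 1 : VP 4) = x12 at *
  generalize (glam 1 0 : VP 4) = x21 at *
  generalize (glam 0 2 : VP 4) = x13 at *
  generalize (glam 2 0 : VP 4) = x31 at *
  generalize (glam 2 1 : VP 4) = x32 at *
  generalize (glam 3 0 : VP 4) = x41 at *
  generalize (glam 3 1 : VP 4) = x42 at *
  calc _ = x21 * x31 * x13 * x12 * x32 * (x31 * x42) * x31⁻¹ * x12 := by group
    _ = x21 * (x31 * x13 * x12 * x32 * x42) * x12 := by rw [← h]; group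
    _ = _ := by rw [hw]; group

lemma core3 : c12 * a13⁻¹ * c11 * a22 = c11 * a22 * a13⁻¹ * c12 := by
  have hM : a13⁻¹ * a22 = (glam 0 1)⁻¹ * (glam 1 3 * glam 1 2) := by
    rw [a22, a22_eq, a13]; group
  have hN : glam 0 1 * a22 = glam 1 3 * glam 1 2 * a13 := by
    have := lam12_a22
    rw [a22, a13]
    simpa only [mul_assoc] using this
  have hw := word_a
  rw [mul_assoc _ c11, comm_c11_a22.eq, ← mul_assoc, mul_assoc c12, hM, ← comm_c11_a22.eq, c11, c12,
    a11, b11, a12, b12, mul_assoc (glam 1 0) _ a22, hN]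
  generalize (glam 0 1 : VP 4) = x12 at *
  generalize (glam 1 0 : VP 4) = x21 at *
  generalize (glam 0 2 : VP 4) = x13 at *
  generalize (glam 2 0 : VP 4) = x31 at *
  generalize (glam 1 2 : VP 4) = x23 at *
  generalize (glam 1 3 : VP 4) = x24 at *
  calc _ = x21 * (x31 * x13 * x24 * x23 * x21) * x12 := by group
    _ = _ := by rw [hw]; group

lemma core4 : c12 * b13⁻¹ * c11 * b22 = b22 * c11 * b13⁻¹ * c12 := by
  have hN := lam12_b22
  have hw := word_b
  rw [← comm_c11_b22.eq, c11, c12, a11, b11, a12, b12, b13, b22]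
  generalize (glam 0 1 : VP 4) = x12 at *
  generalize (glam 1 0 : VP 4) = x21 at *
  generalize (glam 0 2 : VP 4) = x13 at *
  generalize (glam 2 0 : VP 4) = x31 at *
  generalize (glam 2 1 : VP 4) = x32 at *
  generalize (glam 3 0 : VP 4) = x41 at *
  generalize (glam 3 1 : VP 4) = x42 at *
  calc _ = x21 * x31 * x13 * x12 * x41⁻¹ * x31⁻¹ * (x12 * x32 * x31 * x42 * x41) := by group
    _ = x21 * (x31 * x13 * x12 * x32 * x42) * x12 := by rw [hN]; group
    _ = _ := by rw [hw]; group

lemma comm_c12_twist : Commute c12 (c21 * c11) := yb3_plain.comm_twist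

lemma comm_c11_c21 : Commute c11 c21 := yb3_plain.comm_c21

/-- Since `c_{12}` commutes with `c_{21} c_{11}`, conjugation by `c_{21}` may be replaced by
conjugation by `c_{11}^{-1}` in this commutator. -/
lemma cm_c21 : cm c21 c12⁻¹ = c11 * c12 * c11⁻¹ * c12⁻¹ := by
  have h : c21 * c11 * c12 = c12 * (c21 * c11) := comm_c12_twist.eq.symm
  have h' : c21⁻¹ * c12 * c21 = c11 * c12 * c11⁻¹ := by
    rw [mul_assoc, inv_mul_eq_iff_eq_mul, eq_comm]
    calc c21 * (c11 * c12 * c11⁻¹) = c21 * c11 * c12 * c11⁻¹ := by group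
      _ = c12 * c21 := by rw [h]; group
  rw [cm, inv_inv, h']

lemma cm_c12 : cm c12 c21⁻¹ = c12⁻¹ * c11⁻¹ * c12 * c11 := by
  have h : c11 * c21 * c12 = c12 * (c11 * c21) := by
    rw [comm_c11_c21.eq]
    exact comm_c12_twist.eq.symm
  have h' : c21 * c12 * c21⁻¹ = c11⁻¹ * c12 * c11 := by
    rw [mul_assoc c11⁻¹, eq_inv_mul_iff_mul_eq]
    calc c11 * (c21 * c12 * c21⁻¹) = c11 * c21 * c12 * c21⁻¹ := by group
      _ = c12 * c11 := by rw [h]; group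
  rw [cm, inv_inv, mul_assoc, mul_assoc, ← mul_assoc c21, h']
  group

lemma c31_eq : c31 = glam 3 2 * glam 3 1 * glam 3 0 * (glam 0 3 * (glam 1 3 * glam 2 3)) := by
  simp only [c31, a31, b31, mul_assoc]

lemma c22_eq : c22 = glam 2 1 * glam 3 1 * (glam 2 0 * glam 3 0) *
    (glam 0 3 * glam 0 2 * (glam 1 3 * glam 1 2)) := by
  rw [c22, b22_eq, a22, a22_eq, mul_assoc (glam 0 3 * glam 0 2)]

lemma c13_eq2 : c13 = glam 1 0 * glam 2 0 * glam 3 0 * (glam 0 3 * (glam 0 2 * glam 0 1)) := by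
  simp only [c13, a13, b13, mul_assoc]

lemma c13_eq3 : c13 = glam 1 0 * (glam 2 0 * glam 3 0) * (glam 0 3 * glam 0 2 * glam 0 1) := by
  simp only [c13, a13, b13, mul_assoc]

/-- Conjugation by `c_{13}^{∓1} c_{31}^{±1}` or `c_{13}^{∓1} c_{22}^{±1}` is conjugation by
`c_{12}^{∓1}` or `c_{11}^{∓1}` on `a_{13}`. -/
lemma cj_a13 : cj a13 (c13⁻¹ * c31) = cj a13 c12⁻¹ ∧ cj a13 (c13 * c31⁻¹) = cj a13 c12 ∧
    cj a13 (c13⁻¹ * c22) = cj a13 c11⁻¹ ∧ cj a13 (c13 * c22⁻¹) = cj a13 c11 := by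
  have h2 := yb3_double2.comm_a12
  have e2 : a13 = glam 0 3 * (glam 0 2 * glam 0 1) := mul_assoc _ _ _
  rw [← e2] at h2
  have h3 := yb3_double3.comm_a12
  refine ⟨?_, ?_, ?_, ?_⟩
  · rw [c13_eq2, c31_eq]; exact yb3_double2.cj_inv h2
  · rw [c13_eq2, c31_eq]; exact yb3_double2.cj_pos h2
  · rw [c13_eq3, c22_eq]; exact yb3_double3.cj_inv h3
  · rw [c13_eq3, c22_eq]; exact yb3_double3.cj_pos h3

/-- The analogue of `cj_a13` for `b_{13}`. -/
lemma cj_b13 : cj b13 (c13⁻¹ * c31) = cj b13 c12⁻¹ ∧ cj b13 (c13 * c31⁻¹) = cj b13 c12 ∧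
    cj b13 (c13⁻¹ * c22) = cj b13 c11⁻¹ ∧ cj b13 (c13 * c22⁻¹) = cj b13 c11 := by
  have h2 := yb3_double2.comm_b12
  have h3 := yb3_double3.comm_b12
  have e3 : b13 = glam 1 0 * (glam 2 0 * glam 3 0) := mul_assoc _ _ _
  rw [← e3] at h3
  refine ⟨?_, ?_, ?_, ?_⟩
  · rw [c13_eq2, c31_eq]; exact yb3_double2.cj_inv h2
  · rw [c13_eq2, c31_eq]; exact yb3_double2.cj_pos h2
  · rw [c13_eq3, c22_eq]; exact yb3_double3.cj_inv h3
  · rw [c13_eq3, c22_eq]; exact yb3_double3.cj_pos h3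

/-- Corollary 4.10: conjugation formulas in `VP_4`:
(1) `a_{22}^{c_{12}⁻¹} = a_{13}^{c_{13}⁻¹c_{31}} (a_{13}^{c_{13}⁻¹c_{22}})⁻¹ a_{22} [c_{21}, c_{12}⁻¹]`;
(2) `b_{22}^{c_{12}} = [c_{12}, c_{21}⁻¹] b_{22} (b_{13}^{c_{13}c_{22}⁻¹})⁻¹ b_{13}^{c_{13}c_{31}⁻¹}`;
(3) `a_{22}^{c_{12}} = [c_{12}, c_{21}⁻¹] (a_{13}^{c_{13}c_{22}⁻¹})⁻¹ a_{22} a_{13}^{c_{13}c_{31}⁻¹}`;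
(4) `b_{22}^{c_{12}⁻¹} = b_{13}^{c_{13}⁻¹c_{31}} b_{22} (b_{13}^{c_{13}⁻¹c_{22}})⁻¹ [c_{21}, c_{12}⁻¹]`. -/
theorem statement17 :
    cj a22 c12⁻¹ = cj a13 (c13⁻¹ * c31) * (cj a13 (c13⁻¹ * c22))⁻¹ * a22 * cm c21 c12⁻¹ ∧
    cj b22 c12 = cm c12 c21⁻¹ * b22 * (cj b13 (c13 * c22⁻¹))⁻¹ * cj b13 (c13 * c31⁻¹) ∧
    cj a22 c12 = cm c12 c21⁻¹ * (cj a13 (c13 * c22⁻¹))⁻¹ * a22 * cj a13 (c13 * c31⁻¹) ∧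
    cj b22 c12⁻¹ = cj b13 (c13⁻¹ * c31) * b22 * (cj b13 (c13⁻¹ * c22))⁻¹ * cm c21 c12⁻¹ := by
  obtain ⟨p1, p2, p3, p4⟩ := cj_a13
  obtain ⟨q1, q2, q3, q4⟩ := cj_b13
  have hA := comm_c11_a22.eq
  have hB := comm_c11_b22.eq
  have k1 := core1
  have k2 := core2
  have k3 := core3
  have k4 := core4
  rw [p1, p2, p3, p4, q1, q2, q3, q4, cm_c21, cm_c12]
  simp only [cj, inv_inv, mul_inv_rev]
  generalize c11 = c at *
  generalize c12 = d at *
  generalize a22 = A at *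
  generalize b22 = B at *
  generalize a13 = a at *
  generalize b13 = b at *
  refine ⟨?_, ?_, ?_, ?_⟩ <;> symm
  · calc _ = d * a * d⁻¹ * c * a⁻¹ * c⁻¹ * (A * c) * d * c⁻¹ * d⁻¹ := by group
      _ = d * a * d⁻¹ * c * (a⁻¹ * A * d * c⁻¹) * d⁻¹ := by rw [← hA]; group
      _ = _ := by rw [← k1]; group
  · calc _ = d⁻¹ * c⁻¹ * d * (c * B) * c⁻¹ * b⁻¹ * c * d⁻¹ * b * d := by group
      _ = d⁻¹ * c⁻¹ * (d * B * b⁻¹ * c) * d⁻¹ * b * d := by rw [hB]; group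
      _ = _ := by rw [k2]; group
  · calc _ = d⁻¹ * c⁻¹ * (d * a⁻¹ * c * A) * d⁻¹ * a * d := by group
      _ = _ := by rw [k3]; group
  · calc _ = d * b * d⁻¹ * (B * c * b⁻¹ * d) * c⁻¹ * d⁻¹ := by group
      _ = d * (c * B) * c⁻¹ * d⁻¹ := by rw [← k4]; group
      _ = _ := by rw [hB]; group

end Paper
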